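/- Over the alphabet Σ = {a, b, c}, the iterated n-ary initial literal shuffle of the singleton language {abc} is exactly {aᵐbᵐcᵐ : m ≥ 0}: (abc)^{⧢₁,*} = { aᵐbᵐcᵐ : m ≥ 0 }. In particular, the iterated n-ary initial literal shuffle of a finite language can be non-context-free. -/

import Mathlib

/-!
Every factor of an `n`-fold shuffle of the singleton `{abc}` is the word `abc`; all factors have the
same length, so no padding is inserted. The columns of the `n × 3` array whose rows are all `abc`
are `aⁿ`, `bⁿ`, `cⁿ` (`transpose_replicate_triple`, by induction on the number of rows), hence the
perfect interleaving reads `aⁿbⁿcⁿ` (`shuffle1_abc`). The word with `m = 0` is the empty word, which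
the iterated shuffle contains by definition.
-/

/-!
Common definitions.

Words over an alphabet `β` are modelled as `List β`.  The alphabet
`Σ ∪ {$}` is modelled as `Option β`, where `none` plays the role of the
dollar sign `$` and `some x` the role of a letter `x ∈ Σ`.  The erasing
homomorphism `h` (with `h($) = ε`, `h(x) = x`) is `List.reduceOption`.
-/

/-- Perfect interleaving `I(v₁, …, vₙ)` of equal-length words, read column-wise. -/
def interleave {β : Type*} (vs : List (List β)) : List β :=
  vs.transpose.flatten

/-- `$^k u $^r`, the two-sided dollar padding of the word `u`. -/
def dollarPad {β : Type*} (k : ℕ) (u : List β) (r : ℕ) : List (Option β) :=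
  List.replicate k none ++ u.map some ++ List.replicate r none

/-- The `n`-ary initial literal shuffle `⧢₁ⁿ(u₁, …, uₙ)`:
pad each word with a fresh symbol (`none`) to the maximal length `N`,
interleave, and erase the fresh symbols. -/
def shuffle1 {β : Type*} {n : ℕ} (us : Fin n → List β) : List β :=
  (interleave (List.ofFn fun i =>
    (us i).map some ++
      List.replicate ((Finset.univ.sup fun j => (us j).length) - (us i).length)
        (none : Option β))).reduceOption

/-- The `n`-ary literal shuffle `⧢₂ⁿ(u₁, …, uₙ)`:
all erased interleavings of paddings `$^k uᵢ $^{r-k}` with `r = n·N - |uᵢ|`. -/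
def shuffle2 {β : Type*} {n : ℕ} (us : Fin n → List β) : Set (List β) :=
  { w | ∃ k : Fin n → ℕ,
      (∀ i, k i ≤ n * (Finset.univ.sup fun j => (us j).length) - (us i).length) ∧
      w = (interleave (List.ofFn fun i =>
        dollarPad (k i) (us i)
          (n * (Finset.univ.sup fun j => (us j).length) - (us i).length - k i))).reduceOption }

/-- Extension of `⧢₁ⁿ` to languages. -/
def shuffle1L {β : Type*} {n : ℕ} (Ls : Fin n → Set (List β)) : Set (List β) :=
  { w | ∃ us : Fin n → List β, (∀ i, us i ∈ Ls i) ∧ w = shuffle1 us }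

/-- Extension of `⧢₂ⁿ` to languages. -/
def shuffle2L {β : Type*} {n : ℕ} (Ls : Fin n → Set (List β)) : Set (List β) :=
  { w | ∃ us : Fin n → List β, (∀ i, us i ∈ Ls i) ∧ w ∈ shuffle2 us }

/-- Iterated version `L^{⧢₁,*} = {ε} ∪ ⋃_{n ≥ 1} ⧢₁ⁿ(L, …, L)`. -/
def itShuffle1 {β : Type*} (L : Set (List β)) : Set (List β) :=
  {([] : List β)} ∪ ⋃ (n : ℕ) (_ : 1 ≤ n), shuffle1L (fun _ : Fin n => L)

/-- Iterated version `L^{⧢₂,*} = {ε} ∪ ⋃_{n ≥ 1} ⧢₂ⁿ(L, …, L)`. -/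
def itShuffle2 {β : Type*} (L : Set (List β)) : Set (List β) :=
  {([] : List β)} ∪ ⋃ (n : ℕ) (_ : 1 ≤ n), shuffle2L (fun _ : Fin n => L)

/-- `IsShuffle u v w` : `w` is an interleaving of `u` and `v`
(ordinary shuffle of words). -/
inductive IsShuffle {β : Type*} : List β → List β → List β → Prop
  | nil : IsShuffle [] [] []
  | left {a : β} {u v w : List β} : IsShuffle u v w → IsShuffle (a :: u) v (a :: w)
  | right {a : β} {u v w : List β} : IsShuffle u v w → IsShuffle u (a :: v) (a :: w)

/-- Ordinary shuffle of languages `U ⧢ V`. -/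
def shuffleL {β : Type*} (U V : Set (List β)) : Set (List β) :=
  { w | ∃ u ∈ U, ∃ v ∈ V, IsShuffle u v w }

/-- `n`-fold ordinary shuffle `L₁ ⧢ ⋯ ⧢ Lₙ` (iterated binary shuffle;
`{ε}` is the neutral element). -/
def shuffleN {β : Type*} {n : ℕ} (Ls : Fin n → Set (List β)) : Set (List β) :=
  (List.ofFn Ls).foldr shuffleL {([] : List β)}

/-- Iterated ordinary shuffle closure `L^{⧢,*}`. -/
def itShuffleO {β : Type*} (L : Set (List β)) : Set (List β) :=
  {([] : List β)} ∪ ⋃ (n : ℕ) (_ : 1 ≤ n), shuffleN (fun _ : Fin n => L)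

/-- Bérard's binary initial literal shuffle of languages. -/
def berardShuffle1 {β : Type*} (U V : Set (List β)) : Set (List β) :=
  { w | (∃ x y v, x ++ y ∈ U ∧ v ∈ V ∧ x.length = v.length ∧ w = interleave [x, v] ++ y) ∨
        (∃ u x y, u ∈ U ∧ x ++ y ∈ V ∧ x.length = u.length ∧ w = interleave [u, x] ++ y) }

/-- A three-letter alphabet `Σ = {a, b, c}`. -/
inductive ABC : Type
  | a | b | c
deriving DecidableEq

/-- The transpose of `n + 1` equal rows of length three. There is at least one row because
the transpose of the empty array is `[]` rather than a list of three empty columns. -/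
theorem transpose_replicate_triple {β : Type*} (x y z : β) (n : ℕ) :
    (List.replicate (n + 1) [x, y, z]).transpose =
      [List.replicate (n + 1) x, List.replicate (n + 1) y, List.replicate (n + 1) z] := by
  have key : (List.replicate (n + 1) [x, y, z]).foldr List.transpose.go #[] =
      #[List.replicate (n + 1) x, List.replicate (n + 1) y, List.replicate (n + 1) z] := by
    induction n with
    | zero =>
      simp only [List.replicate_succ, List.replicate_zero, List.foldr_cons, List.foldr_nil,
        List.transpose.go, List.mapM_toArray]
      rfl
    | succ n ih =>
      rw [List.replicate_succ, List.foldr_cons, ih]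
      simp only [List.transpose.go, List.mapM_toArray, List.mapM_cons, List.mapM_nil]
      rfl
  rw [List.transpose, key]

theorem reduceOption_replicate_some {β : Type*} (x : β) (n : ℕ) :
    (List.replicate n (some x)).reduceOption = List.replicate n x := by
  induction n with
  | zero => rfl
  | succ n ih => simp [List.replicate_succ, ih]

open ABC in
theorem shuffle1_abc (n : ℕ) :
    shuffle1 (fun _ : Fin (n + 1) => [a, b, c]) =
      List.replicate (n + 1) a ++ List.replicate (n + 1) b ++ List.replicate (n + 1) c := by
  have hsup : (Finset.univ.sup fun _ : Fin (n + 1) => 3) = 3 :=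
    Finset.sup_const Finset.univ_nonempty 3
  simp only [shuffle1, hsup, interleave, List.ofFn_const, List.map_cons, List.map_nil,
    List.length_cons, List.length_nil, Nat.reduceAdd, Nat.sub_self, List.replicate_zero,
    List.append_nil, transpose_replicate_triple, List.flatten_cons, List.flatten_nil,
    List.reduceOption_append, reduceOption_replicate_some, List.append_assoc]

open ABC in
/-- Over `Σ = {a,b,c}`:
`(abc)^{⧢₁,*} = { aᵐbᵐcᵐ : m ≥ 0 }`. -/
theorem stmt15 :
    itShuffle1 ({[a, b, c]} : Set (List ABC)) =
      { w | ∃ m : ℕ, w = List.replicate m a ++ List.replicate m b ++ List.replicate m c } := by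
  ext w
  simp only [itShuffle1, shuffle1L, Set.mem_union, Set.mem_singleton_iff, Set.mem_iUnion,
    Set.mem_ofPred_eq]
  constructor
  · rintro (rfl | ⟨n, hn, us, hus, rfl⟩)
    · exact ⟨0, rfl⟩
    · obtain ⟨k, rfl⟩ := Nat.exists_eq_add_of_le' hn
      obtain rfl : us = fun _ => [a, b, c] := funext hus
      exact ⟨k + 1, shuffle1_abc k⟩
  · rintro ⟨_ | k, rfl⟩
    · exact Or.inl rfl
    · exact Or.inr ⟨k + 1, Nat.le_add_left 1 k, fun _ => [a, b, c], fun _ => rfl,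
        (shuffle1_abc k).symm⟩
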